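/- For every pair of points P and Q in ℝ³ there exists a minimizing geodesic Γ : [0,1] → ℝ³ joining P to Q, i.e. a curve which is Lipschitz continuous with respect to the metric d_F, satisfies Γ(0) = P, Γ(1) = Q and L(Γ) = d_F(P,Q), and which can be realized as the uniform limit in the metric d_F of a sequence of admissible locally Lipschitz curves Γ_j joining P to Q with E(Π(Γ_j)) → d_F(P,Q). -/

import Mathlib

open MeasureTheory Set Filter Topology
open scoped ENNReal

noncomputable section

/-- The Euclidean norm of a vector in `ℝ × ℝ`. -/
def enorm2 (v : ℝ × ℝ) : ℝ := Real.sqrt (v.1 ^ 2 + v.2 ^ 2)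

/-- The degenerate length `E(γ) = ∫ₐᵇ F(γ(t)) |γ'(t)| dt` of a planar curve. -/
def degLen (F : ℝ × ℝ → ℝ) (a b : ℝ) (γ : ℝ → ℝ × ℝ) : ℝ :=
  ∫ t in a..b, F (γ t) * enorm2 (deriv γ t)

/-- The signed area `𝒜(γ) = ∫ₐᵇ γ¹(t) (γ²)'(t) dt` of a planar curve. -/
def sArea (a b : ℝ) (γ : ℝ → ℝ × ℝ) : ℝ :=
  ∫ t in a..b, (γ t).1 * deriv (fun s => (γ s).2) t

/-- A locally Lipschitz curve on `[a,b]` joining `p` to `q`. -/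
def IsCurve (a b : ℝ) (γ : ℝ → ℝ × ℝ) (p q : ℝ × ℝ) : Prop :=
  a ≤ b ∧ LocallyLipschitz γ ∧ γ a = p ∧ γ b = q

/-- The standing hypotheses on the potential `W`: smooth, nonnegative, vanishing exactly at the
two distinct wells `pm` and `pp`, with positive definite Hessians there, and bounded away from
zero near infinity (`liminf_{|p|→∞} W(p) > 0`). -/
structure TwoWell (W : ℝ × ℝ → ℝ) (pm pp : ℝ × ℝ) : Prop where
  smooth : ContDiff ℝ (⊤ : ℕ∞) W
  nonneg : ∀ p, 0 ≤ W p
  wells_ne : pm ≠ pp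
  zeroSet : ∀ p, W p = 0 ↔ p = pm ∨ p = pp
  hess_m : ∀ v : ℝ × ℝ, v ≠ 0 → 0 < iteratedFDeriv ℝ 2 W pm ![v, v]
  hess_p : ∀ v : ℝ × ℝ, v ≠ 0 → 0 < iteratedFDeriv ℝ 2 W pp ![v, v]
  coercive : ∃ c > 0, ∃ R : ℝ, ∀ p : ℝ × ℝ, R ≤ ‖p‖ → c ≤ W p

/-- The singular Carnot–Carathéodory distance on `ℝ³` induced by the conformal factor `F`:
the infimum of degenerate lengths of locally Lipschitz planar curves joining the planar
projections of `P` and `Q` whose signed area equals the difference of third coordinates. -/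
def dCC (F : ℝ × ℝ → ℝ) (P Q : ℝ × ℝ × ℝ) : ℝ :=
  sInf { x | ∃ a b γ, IsCurve a b γ (P.1, P.2.1) (Q.1, Q.2.1) ∧
      sArea a b γ = Q.2.2 - P.2.2 ∧ degLen F a b γ = x }

/-- The length of a curve in `ℝ³` with respect to the metric `dCC F`: the supremum over
finite partitions of the sums of distances of consecutive sample points. -/
def pathLen (F : ℝ × ℝ → ℝ) (a b : ℝ) (Γ : ℝ → ℝ × ℝ × ℝ) : ℝ :=
  sSup { x | ∃ (n : ℕ) (t : Fin (n + 1) → ℝ), Monotone t ∧ t 0 = a ∧ t (Fin.last n) = b ∧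
      x = ∑ i : Fin n, dCC F (Γ (t i.castSucc)) (Γ (t i.succ)) }

/-- A curve `Γ = (Γ¹,Γ²,Γ³) : ℝ → ℝ³` is admissible on `[a,b]` if
`(Γ³)'(t) = Γ¹(t) (Γ²)'(t)` for a.e. `t ∈ (a,b)`. -/
def Admissible (a b : ℝ) (Γ : ℝ → ℝ × ℝ × ℝ) : Prop :=
  ∀ᵐ t : ℝ ∂volume, t ∈ Set.Ioo a b →
    deriv (fun s => (Γ s).2.2) t = (Γ t).1 * deriv (fun s => (Γ s).2.1) t

/-- The planar projection `Π(Γ) = (Γ¹,Γ²)` of a curve in `ℝ³`. -/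
def projCurve (Γ : ℝ → ℝ × ℝ × ℝ) : ℝ → ℝ × ℝ := fun t => ((Γ t).1, (Γ t).2.1)

/-!
Competitors for `d_F(P, Q)` of nearly minimal length, lifted to `ℝ³` and reparametrized by constant
speed, are curves `Γₙ` from `P` to `Q` with `d_F(Γₙ(s), Γₙ(t)) ≤ (d_F(P, Q) + 1/n) |s - t|`. An
explicit connecting curve shows that `d_F` is continuous on `ℝ³`, so a pointwise limit of the `Γₙ`
along an ultrafilter is a geodesic, provided that `d_F`-balls are bounded.

Boundedness of the planar part of a ball follows from the coercivity of `F`. For the third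
coordinate, the degeneracy of `F` must be overcome: `x dy` is not bounded by `F` near the zeros of
`F`, but as these are finitely many and `F` grows at least linearly there, it is `O(F)` locally
after subtracting an exact form `dg`. Hence the signed area is controlled by the length and the
bounded boundary term `g(γ(b)) - g(γ(a))`.

The limit geodesic need not be admissible. The approximating admissible curves are obtained from it
by joining its samples at the times `i/n` by competitors of nearly minimal length.
-/

open Asymptotics

section LocallyLipschitzCurves

theorem locallyLipschitz_comp_mul_add {X : Type*} [PseudoMetricSpace X] {γ : ℝ → X}
    (hγ : LocallyLipschitz γ) (c d : ℝ) :
    LocallyLipschitz fun s => γ (c * s + d) :=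
  hγ.comp (ContDiff.locallyLipschitz (𝕂 := ℝ) (by fun_prop))

theorem exists_locallyLipschitz_eqOn_Iic_eqOn_Ici {E : Type*} [SeminormedAddCommGroup E]
    {γ η : ℝ → E} (hγ : LocallyLipschitz γ) (hη : LocallyLipschitz η) {b : ℝ} (hb : γ b = η b) :
    ∃ ζ, LocallyLipschitz ζ ∧ EqOn ζ γ (Iic b) ∧ EqOn ζ η (Ici b) := by
  refine ⟨fun t => γ (min t b) + (η (max t b) - η b), ?_, fun t ht => ?_, fun t ht => ?_⟩
  · exact (hγ.comp (LocallyLipschitz.id.min_const b)).add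
      ((hη.comp (LocallyLipschitz.id.max_const b)).sub (.const _))
  · simp [min_eq_left (mem_Iic.1 ht), max_eq_right (mem_Iic.1 ht)]
  · simp [min_eq_right (mem_Ici.1 ht), max_eq_left (mem_Ici.1 ht), hb]

variable {E : Type*} [NormedAddCommGroup E] [NormedSpace ℝ E] {γ : ℝ → E}

theorem exists_norm_deriv_le_of_locallyLipschitz (hγ : LocallyLipschitz γ) (a b : ℝ) :
    ∃ C, ∀ t ∈ uIcc a b, ‖deriv γ t‖ ≤ C := by
  obtain ⟨K, hK⟩ := hγ.locallyLipschitzOn.exists_lipschitzOnWith_of_compact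
    (isCompact_Icc (a := min a b - 1) (b := max a b + 1))
  refine ⟨K, fun t ht => norm_deriv_le_of_lipschitzOn (Icc_mem_nhds ?_ ?_) hK⟩
  · linarith [show min a b ≤ t from ht.1]
  · linarith [show t ≤ max a b from ht.2]

theorem ae_differentiableAt_of_locallyLipschitz [FiniteDimensional ℝ E]
    (hγ : LocallyLipschitz γ) : ∀ᵐ t, DifferentiableAt ℝ γ t := by
  have hvar : LocallyBoundedVariationOn γ univ := by
    intro a b _ _
    obtain ⟨K, hK⟩ := hγ.locallyLipschitzOn.exists_lipschitzOnWith_of_compact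
      (isCompact_Icc (a := a) (b := b))
    by_cases hab : a ≤ b
    · rw [univ_inter]
      simpa using hK.locallyBoundedVariationOn a b (left_mem_Icc.2 hab) (right_mem_Icc.2 hab)
    · simp [Icc_eq_empty hab]
  exact hvar.ae_differentiableAt

theorem intervalIntegrable_deriv_of_locallyLipschitz [FiniteDimensional ℝ E]
    (hγ : LocallyLipschitz γ) (a b : ℝ) : IntervalIntegrable (deriv γ) volume a b := by
  have : CompleteSpace E := FiniteDimensional.complete ℝ E
  obtain ⟨C, hC⟩ := exists_norm_deriv_le_of_locallyLipschitz hγ a b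
  rw [intervalIntegrable_iff]
  refine Measure.integrableOn_of_bounded (M := C) (by simp) (aestronglyMeasurable_deriv γ _) ?_
  filter_upwards [ae_restrict_mem measurableSet_uIoc] with t ht using hC t (uIoc_subset_uIcc ht)

theorem integral_deriv_of_locallyLipschitz {f : ℝ → ℝ} (hf : LocallyLipschitz f) (a b : ℝ) :
    ∫ t in a..b, deriv f t = f b - f a := by
  obtain ⟨K, hK⟩ := hf.locallyLipschitzOn.exists_lipschitzOnWith_of_compact
    (isCompact_uIcc (a := a) (b := b))
  exact hK.absolutelyContinuousOnInterval.integral_deriv_eq_sub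

theorem norm_sub_le_integral_norm_deriv [FiniteDimensional ℝ E] (hγ : LocallyLipschitz γ)
    {a b : ℝ} (hab : a ≤ b) : ‖γ b - γ a‖ ≤ ∫ t in a..b, ‖deriv γ t‖ := by
  obtain ⟨g, hg, hgγ⟩ := exists_dual_vector'' ℝ (γ b - γ a)
  have hgγ_lip : LocallyLipschitz (g ∘ γ) := g.lipschitz.locallyLipschitz.comp hγ
  calc ‖γ b - γ a‖ = ∫ t in a..b, deriv (g ∘ γ) t := by
        rw [integral_deriv_of_locallyLipschitz hgγ_lip, Function.comp, Function.comp, ← map_sub,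
          hgγ, RCLike.ofReal_real_eq_id, id]
    _ ≤ ∫ t in a..b, ‖deriv γ t‖ := by
        refine intervalIntegral.integral_mono_ae hab
          (intervalIntegrable_deriv_of_locallyLipschitz hgγ_lip a b)
          (intervalIntegrable_deriv_of_locallyLipschitz hγ a b).norm ?_
        filter_upwards [ae_differentiableAt_of_locallyLipschitz hγ] with t ht
        rw [(g.hasFDerivAt.comp_hasDerivAt t ht.hasDerivAt).deriv]
        exact (le_abs_self _).trans (g.le_of_opNorm_le_of_le hg le_rfl |>.trans_eq (one_mul _))

theorem deriv_comp_mul_add (γ : ℝ → E) (c d t : ℝ) :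
    deriv (fun s => γ (c * s + d)) t = c • deriv γ (c * t + d) := by
  rw [deriv_comp_mul_left (x := t) c fun x => γ (x + d), deriv_comp_add_const]

theorem locallyLipschitz_integral {f : ℝ → E}
    (hf : ∀ a b, IntervalIntegrable f volume a b)
    (hbound : ∀ a b, ∃ C, ∀ t ∈ uIcc a b, ‖f t‖ ≤ C) (a : ℝ) :
    LocallyLipschitz fun t => ∫ s in a..t, f s := by
  intro t
  obtain ⟨C, hC⟩ := hbound (t - 1) (t + 1)
  refine ⟨C.toNNReal, uIcc (t - 1) (t + 1), ?_, .of_dist_le_mul fun x hx y hy => ?_⟩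
  · rw [uIcc_of_le (by linarith)]
    exact Icc_mem_nhds (by linarith) (by linarith)
  · rw [dist_eq_norm, intervalIntegral.integral_interval_sub_left (hf a x) (hf a y),
      Real.dist_eq]
    refine intervalIntegral.norm_integral_le_of_norm_le_const fun u hu => ?_
    exact (hC u (uIcc_subset_uIcc hy hx (uIoc_subset_uIcc hu))).trans (Real.le_coe_toNNReal C)

end LocallyLipschitzCurves

theorem locallyLipschitz_fst {γ : ℝ → ℝ × ℝ} (hγ : LocallyLipschitz γ) :
    LocallyLipschitz fun t => (γ t).1 :=
  LipschitzWith.prod_fst.locallyLipschitz.comp hγ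

theorem locallyLipschitz_snd {γ : ℝ → ℝ × ℝ} (hγ : LocallyLipschitz γ) :
    LocallyLipschitz fun t => (γ t).2 :=
  LipschitzWith.prod_snd.locallyLipschitz.comp hγ

theorem deriv_snd {γ : ℝ → ℝ × ℝ} {t : ℝ} (hγ : DifferentiableAt ℝ γ t) :
    deriv (fun s => (γ s).2) t = (deriv γ t).2 :=
  hγ.hasFDerivAt.snd.hasDerivAt.deriv

section EuclideanNorm

theorem enorm2_eq_norm_toLp (v : ℝ × ℝ) : enorm2 v = ‖WithLp.toLp 2 v‖ := by
  simp [enorm2, WithLp.prod_norm_eq_of_L2]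

theorem enorm2_nonneg (v : ℝ × ℝ) : 0 ≤ enorm2 v := Real.sqrt_nonneg _

theorem continuous_enorm2 : Continuous enorm2 := by
  unfold enorm2
  fun_prop

theorem enorm2_smul (c : ℝ) (v : ℝ × ℝ) : enorm2 (c • v) = |c| * enorm2 v := by
  rw [enorm2_eq_norm_toLp, enorm2_eq_norm_toLp, WithLp.toLp_smul, norm_smul, Real.norm_eq_abs]

theorem norm_le_enorm2 (v : ℝ × ℝ) : ‖v‖ ≤ enorm2 v :=
  max_le (Real.abs_le_sqrt (le_add_of_nonneg_right (sq_nonneg v.2)))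
    (Real.abs_le_sqrt (le_add_of_nonneg_left (sq_nonneg v.1)))

end EuclideanNorm

section DegenerateLength

variable {F : ℝ × ℝ → ℝ} {γ η : ℝ → ℝ × ℝ} {a b : ℝ}

theorem intervalIntegrable_enorm2_deriv (hγ : LocallyLipschitz γ) (a b : ℝ) :
    IntervalIntegrable (fun t => enorm2 (deriv γ t)) volume a b := by
  have hderiv := intervalIntegrable_deriv_of_locallyLipschitz hγ a b
  simp only [enorm2_eq_norm_toLp]
  rw [intervalIntegrable_iff] at hderiv ⊢
  exact ((WithLp.prodContinuousLinearEquiv 2 ℝ ℝ ℝ).symm.toContinuousLinearMap.integrable_comp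
    hderiv).norm

theorem intervalIntegrable_degLen (hF : Continuous F) (hγ : LocallyLipschitz γ) (a b : ℝ) :
    IntervalIntegrable (fun t => F (γ t) * enorm2 (deriv γ t)) volume a b :=
  (intervalIntegrable_enorm2_deriv hγ a b).continuousOn_mul (hF.comp hγ.continuous).continuousOn

theorem degLen_nonneg (hF : ∀ p, 0 ≤ F p) (hab : a ≤ b) (γ : ℝ → ℝ × ℝ) : 0 ≤ degLen F a b γ :=
  intervalIntegral.integral_nonneg hab fun _ _ => mul_nonneg (hF _) (enorm2_nonneg _)

theorem degLen_add_degLen (hF : Continuous F) (hγ : LocallyLipschitz γ) (a b c : ℝ) :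
    degLen F a b γ + degLen F b c γ = degLen F a c γ :=
  intervalIntegral.integral_add_adjacent_intervals (intervalIntegrable_degLen hF hγ _ _)
    (intervalIntegrable_degLen hF hγ _ _)

theorem continuous_degLen (hF : Continuous F) (hγ : LocallyLipschitz γ) (a : ℝ) :
    Continuous fun t => degLen F a t γ :=
  intervalIntegral.continuous_primitive (intervalIntegrable_degLen hF hγ) a

theorem degLen_mono (hF₀ : ∀ p, 0 ≤ F p) (hF : Continuous F) (hγ : LocallyLipschitz γ)
    {s t : ℝ} (has : a ≤ s) (htb : t ≤ b) : degLen F s t γ ≤ degLen F a b γ := by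
  linarith [degLen_add_degLen hF hγ a s b, degLen_add_degLen hF hγ s t b,
    degLen_nonneg hF₀ has γ, degLen_nonneg hF₀ htb γ]

theorem degLen_congr (F : ℝ × ℝ → ℝ) (hab : a ≤ b) (h : EqOn γ η (Icc a b)) :
    degLen F a b γ = degLen F a b η := by
  refine intervalIntegral.integral_congr_Ioo_of_le hab fun t ht => ?_
  have hγη : γ =ᶠ[𝓝 t] η := h.eventuallyEq_of_mem (Icc_mem_nhds ht.1 ht.2)
  simp only [hγη.eq_of_nhds, hγη.deriv_eq]

theorem degLen_comp_mul_add (F : ℝ × ℝ → ℝ) (γ : ℝ → ℝ × ℝ) (c d a b : ℝ) :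
    degLen F a b (fun s => γ (c * s + d)) =
      SignType.sign c * degLen F (c * a + d) (c * b + d) γ := by
  unfold degLen
  rw [← intervalIntegral.smul_integral_comp_mul_add, ← intervalIntegral.integral_smul,
    ← intervalIntegral.integral_const_mul]
  congr 1 with t
  rw [deriv_comp_mul_add, enorm2_smul, ← sign_mul_self c, smul_eq_mul]
  ring

theorem degLen_comp_neg (F : ℝ × ℝ → ℝ) (γ : ℝ → ℝ × ℝ) (a b : ℝ) :
    degLen F (-b) (-a) (fun s => γ (-s)) = degLen F a b γ := by
  have h := degLen_comp_mul_add F γ (-1) 0 (-b) (-a)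
  simpa [degLen, intervalIntegral.integral_symm a b] using h

theorem mul_norm_sub_le_degLen (hF : Continuous F) (hγ : LocallyLipschitz γ)
    (hab : a ≤ b) {c : ℝ} (hc₀ : 0 ≤ c) (hc : ∀ t ∈ Ioo a b, c ≤ F (γ t)) :
    c * ‖γ b - γ a‖ ≤ degLen F a b γ := by
  have hnorm := (intervalIntegrable_deriv_of_locallyLipschitz hγ a b).norm
  calc c * ‖γ b - γ a‖ ≤ c * ∫ t in a..b, ‖deriv γ t‖ := by
        gcongr
        exact norm_sub_le_integral_norm_deriv hγ hab
    _ = ∫ t in a..b, c * ‖deriv γ t‖ := (intervalIntegral.integral_const_mul _ _).symm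
    _ ≤ degLen F a b γ :=
        intervalIntegral.integral_mono_on_of_le_Ioo hab (hnorm.const_mul c)
          (intervalIntegrable_degLen hF hγ a b) fun t ht =>
            mul_le_mul (hc t ht) (norm_le_enorm2 _) (norm_nonneg _) (hc₀.trans (hc t ht))

end DegenerateLength

section SignedArea

variable {γ η : ℝ → ℝ × ℝ} {a b : ℝ}

theorem intervalIntegrable_sArea (hγ : LocallyLipschitz γ) (a b : ℝ) :
    IntervalIntegrable (fun t => (γ t).1 * deriv (fun s => (γ s).2) t) volume a b :=
  (intervalIntegrable_deriv_of_locallyLipschitz (locallyLipschitz_snd hγ) a b).continuousOn_mul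
    (locallyLipschitz_fst hγ).continuous.continuousOn

theorem sArea_add_sArea (hγ : LocallyLipschitz γ) (a b c : ℝ) :
    sArea a b γ + sArea b c γ = sArea a c γ :=
  intervalIntegral.integral_add_adjacent_intervals (intervalIntegrable_sArea hγ _ _)
    (intervalIntegrable_sArea hγ _ _)

theorem sArea_congr (hab : a ≤ b) (h : EqOn γ η (Icc a b)) : sArea a b γ = sArea a b η := by
  refine intervalIntegral.integral_congr_Ioo_of_le hab fun t ht => ?_
  have hγη : γ =ᶠ[𝓝 t] η := h.eventuallyEq_of_mem (Icc_mem_nhds ht.1 ht.2)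
  have hsnd : (fun s => (γ s).2) =ᶠ[𝓝 t] fun s => (η s).2 := hγη.fun_comp Prod.snd
  simp only [hγη.eq_of_nhds, hsnd.deriv_eq]

theorem sArea_comp_mul_add (γ : ℝ → ℝ × ℝ) (c d a b : ℝ) :
    sArea a b (fun s => γ (c * s + d)) = sArea (c * a + d) (c * b + d) γ := by
  unfold sArea
  rw [← intervalIntegral.smul_integral_comp_mul_add, ← intervalIntegral.integral_smul]
  congr 1 with t
  rw [deriv_comp_mul_add fun s => (γ s).2, smul_eq_mul, smul_eq_mul, mul_left_comm]

theorem sArea_comp_neg (γ : ℝ → ℝ × ℝ) (a b : ℝ) :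
    sArea (-b) (-a) (fun s => γ (-s)) = -sArea a b γ := by
  have h := sArea_comp_mul_add γ (-1) 0 (-b) (-a)
  simpa [sArea, intervalIntegral.integral_symm a b] using h

theorem locallyLipschitz_sArea (hγ : LocallyLipschitz γ) (a : ℝ) :
    LocallyLipschitz fun t => sArea a t γ := by
  refine locallyLipschitz_integral (intervalIntegrable_sArea hγ) (fun c d => ?_) a
  obtain ⟨C, hC⟩ := exists_norm_deriv_le_of_locallyLipschitz (locallyLipschitz_snd hγ) c d
  obtain ⟨B, hB⟩ := (isCompact_uIcc (a := c) (b := d)).exists_bound_of_continuousOn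
    (locallyLipschitz_fst hγ).continuous.continuousOn
  exact ⟨B * C, fun t ht => norm_mul_le_of_le (hB t ht) (hC t ht)⟩

end SignedArea

/-- The planar curve `γ` on `[a, b]` runs from the projection of `P` to the projection of `Q` and
encloses the signed area `Q³ - P³`; these are the competitors in the definition of `dCC F P Q`. -/
def JoinsHorizontally (a b : ℝ) (γ : ℝ → ℝ × ℝ) (P Q : ℝ × ℝ × ℝ) : Prop :=
  IsCurve a b γ (P.1, P.2.1) (Q.1, Q.2.1) ∧ sArea a b γ = Q.2.2 - P.2.2

/-- The curve in `ℝ³` over the planar curve `γ` that starts at height `z` at time `a` and whose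
third coordinate grows by the signed area swept out by `γ`. -/
def horizontalLift (z a : ℝ) (γ : ℝ → ℝ × ℝ) (t : ℝ) : ℝ × ℝ × ℝ :=
  ((γ t).1, (γ t).2, z + sArea a t γ)

namespace JoinsHorizontally

variable {F : ℝ × ℝ → ℝ} {γ η : ℝ → ℝ × ℝ} {a b c : ℝ} {P Q R : ℝ × ℝ × ℝ}

theorem le (h : JoinsHorizontally a b γ P Q) : a ≤ b := h.1.1

theorem locallyLipschitz (h : JoinsHorizontally a b γ P Q) : LocallyLipschitz γ := h.1.2.1

theorem apply_left (h : JoinsHorizontally a b γ P Q) : γ a = (P.1, P.2.1) := h.1.2.2.1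

theorem apply_right (h : JoinsHorizontally a b γ P Q) : γ b = (Q.1, Q.2.1) := h.1.2.2.2

theorem const (a : ℝ) (P : ℝ × ℝ × ℝ) : JoinsHorizontally a a (fun _ => (P.1, P.2.1)) P P :=
  ⟨⟨le_rfl, .const _, rfl, rfl⟩, by simp [sArea]⟩

theorem congr (h : JoinsHorizontally a b γ P Q) (hη : LocallyLipschitz η)
    (heq : EqOn η γ (Icc a b)) : JoinsHorizontally a b η P Q :=
  ⟨⟨h.le, hη, (heq (left_mem_Icc.2 h.le)).trans h.apply_left,
    (heq (right_mem_Icc.2 h.le)).trans h.apply_right⟩, (sArea_congr h.le heq).trans h.2⟩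

theorem trans (hPQ : JoinsHorizontally a b γ P Q) (hQR : JoinsHorizontally b c γ Q R) :
    JoinsHorizontally a c γ P R := by
  refine ⟨⟨hPQ.le.trans hQR.le, hPQ.locallyLipschitz, hPQ.apply_left, hQR.apply_right⟩, ?_⟩
  rw [← sArea_add_sArea hPQ.locallyLipschitz a b c, hPQ.2, hQR.2]
  ring

theorem comp_neg (h : JoinsHorizontally a b γ P Q) :
    JoinsHorizontally (-b) (-a) (fun t => γ (-t)) Q P := by
  refine ⟨⟨neg_le_neg h.le, ?_, ?_, ?_⟩, ?_⟩
  · simpa using locallyLipschitz_comp_mul_add h.locallyLipschitz (-1) 0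
  · simpa using h.apply_right
  · simpa using h.apply_left
  · rw [sArea_comp_neg, h.2, neg_sub]

theorem exists_degLen_eq (h : JoinsHorizontally a b γ P Q) (F : ℝ × ℝ → ℝ) {a' b' : ℝ}
    (hab' : a' < b') :
    ∃ η, JoinsHorizontally a' b' η P Q ∧ degLen F a' b' η = degLen F a b γ := by
  set c := (b - a) / (b' - a') with hc
  set d := a - c * a' with hd
  have hb' : b' - a' ≠ 0 := (sub_pos.2 hab').ne'
  have map_left : c * a' + d = a := by ring
  have map_right : c * b' + d = b := by
    rw [hd, hc]
    field_simp
    ring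
  refine ⟨fun s => γ (c * s + d), ⟨⟨hab'.le, locallyLipschitz_comp_mul_add h.locallyLipschitz c d,
    ?_, ?_⟩, ?_⟩, ?_⟩
  · exact (congrArg γ map_left).trans h.apply_left
  · exact (congrArg γ map_right).trans h.apply_right
  · rw [sArea_comp_mul_add, map_left, map_right, h.2]
  · rw [degLen_comp_mul_add, map_left, map_right]
    rcases h.le.eq_or_lt with rfl | hab
    · simp [degLen]
    · rw [sign_pos (div_pos (sub_pos.2 hab) (sub_pos.2 hab')), SignType.coe_one, one_mul]

theorem horizontalLift_left (h : JoinsHorizontally a b γ P Q) :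
    horizontalLift P.2.2 a γ a = P := by
  simp [horizontalLift, h.apply_left, sArea]

theorem horizontalLift_right (h : JoinsHorizontally a b γ P Q) :
    horizontalLift P.2.2 a γ b = Q := by
  simp [horizontalLift, h.apply_right, h.2]

theorem dCC_le (h : JoinsHorizontally a b γ P Q) (hF : ∀ p, 0 ≤ F p) :
    dCC F P Q ≤ degLen F a b γ := by
  refine csInf_le ⟨0, ?_⟩ ⟨a, b, γ, h.1, h.2, rfl⟩
  rintro _ ⟨a, b, γ, hγ, -, rfl⟩
  exact degLen_nonneg hF hγ.1 γ

end JoinsHorizontally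

section HorizontalLift

variable {γ : ℝ → ℝ × ℝ}

theorem joinsHorizontally_horizontalLift (hγ : LocallyLipschitz γ) (z a : ℝ) {s t : ℝ}
    (hst : s ≤ t) :
    JoinsHorizontally s t γ (horizontalLift z a γ s) (horizontalLift z a γ t) := by
  refine ⟨⟨hst, hγ, rfl, rfl⟩, ?_⟩
  rw [horizontalLift, horizontalLift, ← sArea_add_sArea hγ a s t]
  ring

theorem locallyLipschitz_horizontalLift (hγ : LocallyLipschitz γ) (z a : ℝ) :
    LocallyLipschitz (horizontalLift z a γ) :=
  (locallyLipschitz_fst hγ).prodMk ((locallyLipschitz_snd hγ).prodMk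
    ((LocallyLipschitz.const z).add (locallyLipschitz_sArea hγ a)))

theorem admissible_horizontalLift (hγ : LocallyLipschitz γ) (z a b : ℝ) :
    Admissible a b (horizontalLift z a γ) := by
  filter_upwards [(intervalIntegrable_sArea hγ a b).ae_hasDerivAt_integral] with t hderiv ht
  have htab : t ∈ uIcc a b := Icc_subset_uIcc (Ioo_subset_Icc_self ht)
  exact ((hderiv htab a left_mem_uIcc).const_add z).deriv

end HorizontalLift

section ConnectingCurve

theorem integral_zero_one_sum_mul_pow {n : ℕ} (k : Fin n → ℝ) :
    ∫ t in (0 : ℝ)..1, ∑ i, k i * t ^ (i : ℕ) = ∑ i, k i / ((i : ℕ) + 1) := by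
  rw [intervalIntegral.integral_finsetSum fun i _ => (by fun_prop : Continuous
    fun t : ℝ => k i * t ^ (i : ℕ)).intervalIntegrable 0 1]
  simp [intervalIntegral.integral_const_mul, integral_pow, div_eq_mul_inv]

/-- The segment from `p` to `p + v`, deformed so that it encloses the additional signed area
`α * β`: since `∫₀¹ (t - t²) = 1/6` and `∫₀¹ (t - t²)(1 - 6t + 6t²) = -1/30`, the bump `α (t - t²)`
contributes `α (v.2 / 6 - B / 30)`, where `B = 5 v.2 - 30 β`. -/
def bulgedSegment (p v : ℝ × ℝ) (α β t : ℝ) : ℝ × ℝ :=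
  (p.1 + t * v.1 + α * (t - t ^ 2),
    p.2 + t * v.2 + (5 * v.2 - 30 * β) * (t - 3 * t ^ 2 + 2 * t ^ 3))

theorem hasDerivAt_bulgedSegment (p v : ℝ × ℝ) (α β t : ℝ) :
    HasDerivAt (bulgedSegment p v α β)
      (v.1 + α * (1 - 2 * t), v.2 + (5 * v.2 - 30 * β) * (1 - 6 * t + 6 * t ^ 2)) t := by
  have hid := hasDerivAt_id' t
  refine HasDerivAt.prodMk ?_ ?_
  · refine (((hid.mul_const v.1).const_add p.1).add ((hid.sub (hid.pow 2)).const_mul α)).congr_deriv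
      ?_
    simp
  · refine (((hid.mul_const v.2).const_add p.2).add
      (((hid.sub ((hid.pow 2).const_mul 3)).add ((hid.pow 3).const_mul 2)).const_mul
        (5 * v.2 - 30 * β))).congr_deriv ?_
    push_cast
    ring

theorem locallyLipschitz_bulgedSegment (p v : ℝ × ℝ) (α β : ℝ) :
    LocallyLipschitz (bulgedSegment p v α β) :=
  ContDiff.locallyLipschitz (𝕂 := ℝ) (by unfold bulgedSegment; fun_prop)

theorem sArea_bulgedSegment (p v : ℝ × ℝ) (α β : ℝ) :
    sArea 0 1 (bulgedSegment p v α β) = (p.1 + v.1 / 2) * v.2 + α * β := by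
  set B := 5 * v.2 - 30 * β with hB
  have hsnd (t : ℝ) : deriv (fun s => (bulgedSegment p v α β s).2) t =
      v.2 + B * (1 - 6 * t + 6 * t ^ 2) := by
    have hderiv := hasDerivAt_bulgedSegment p v α β t
    rw [deriv_snd hderiv.differentiableAt, hderiv.deriv]
  calc sArea 0 1 (bulgedSegment p v α β)
      = ∫ t in (0 : ℝ)..1, ∑ i, ![p.1 * (v.2 + B),
          (v.1 + α) * (v.2 + B) - 6 * p.1 * B,
          6 * p.1 * B - 6 * (v.1 + α) * B - α * (v.2 + B),
          6 * (v.1 + α) * B + 6 * α * B, -(6 * α * B)] i * t ^ (i : ℕ) := by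
        refine intervalIntegral.integral_congr fun t _ => ?_
        rw [hsnd]
        simp only [bulgedSegment, Fin.sum_univ_five, Fin.isValue, Matrix.cons_val,
          Fin.coe_ofNat_eq_mod, Nat.one_mod]
        ring
    _ = (p.1 + v.1 / 2) * v.2 + α * β := by
        rw [integral_zero_one_sum_mul_pow, hB]
        simp only [Fin.sum_univ_five, Fin.isValue, Matrix.cons_val, Fin.coe_ofNat_eq_mod,
          Nat.one_mod, Nat.zero_mod]
        push_cast
        ring

theorem continuous_degLen_bulgedSegment {F : ℝ × ℝ → ℝ} (hF : Continuous F) :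
    Continuous fun x : (ℝ × ℝ) × (ℝ × ℝ) × ℝ × ℝ =>
      degLen F 0 1 (bulgedSegment x.1 x.2.1 x.2.2.1 x.2.2.2) := by
  unfold degLen
  simp only [(hasDerivAt_bulgedSegment _ _ _ _ _).deriv]
  refine intervalIntegral.continuous_parametric_intervalIntegral_of_continuous' ?_ 0 1
  exact (hF.comp (by unfold bulgedSegment; fun_prop)).mul (continuous_enorm2.comp (by fun_prop))

theorem degLen_bulgedSegment_zero (F : ℝ × ℝ → ℝ) (p : ℝ × ℝ) :
    degLen F 0 1 (bulgedSegment p 0 0 0) = 0 := by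
  simp [degLen, (hasDerivAt_bulgedSegment _ _ _ _ _).deriv, enorm2]

/-- The signed area enclosed by a competitor for `dCC F P Q` in excess of that enclosed by the
segment between the projections. -/
def excessArea (P Q : ℝ × ℝ × ℝ) : ℝ :=
  Q.2.2 - P.2.2 - (P.1 + Q.1) / 2 * (Q.2.1 - P.2.1)

/-- A competitor for `dCC F P Q` depending continuously on `P` and `Q`. -/
def connectingCurve (P Q : ℝ × ℝ × ℝ) : ℝ → ℝ × ℝ :=
  bulgedSegment (P.1, P.2.1) (Q.1 - P.1, Q.2.1 - P.2.1)
    (√(excessArea P Q) + √(-excessArea P Q)) (√(excessArea P Q) - √(-excessArea P Q))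

theorem sqrt_add_sqrt_neg_mul_sqrt_sub_sqrt_neg (x : ℝ) : (√x + √(-x)) * (√x - √(-x)) = x := by
  rcases le_total 0 x with hx | hx
  · simp [Real.sqrt_eq_zero_of_nonpos (neg_nonpos.2 hx), Real.mul_self_sqrt hx]
  · simp [Real.sqrt_eq_zero_of_nonpos hx, Real.mul_self_sqrt (neg_nonneg.2 hx)]

theorem joinsHorizontally_connectingCurve (P Q : ℝ × ℝ × ℝ) :
    JoinsHorizontally 0 1 (connectingCurve P Q) P Q := by
  refine ⟨⟨zero_le_one, locallyLipschitz_bulgedSegment _ _ _ _, ?_, ?_⟩, ?_⟩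
  · simp [connectingCurve, bulgedSegment]
  · norm_num [connectingCurve, bulgedSegment]
  · rw [connectingCurve, sArea_bulgedSegment, sqrt_add_sqrt_neg_mul_sqrt_sub_sqrt_neg, excessArea]
    ring

theorem tendsto_degLen_connectingCurve {F : ℝ × ℝ → ℝ} (hF : Continuous F) (P : ℝ × ℝ × ℝ) :
    Tendsto (fun Q => degLen F 0 1 (connectingCurve P Q)) (𝓝 P) (𝓝 0) := by
  have hcont : Continuous fun Q => degLen F 0 1 (connectingCurve P Q) :=
    (continuous_degLen_bulgedSegment hF).comp
      (f := fun Q : ℝ × ℝ × ℝ => ((P.1, P.2.1), (Q.1 - P.1, Q.2.1 - P.2.1),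
        √(excessArea P Q) + √(-excessArea P Q), √(excessArea P Q) - √(-excessArea P Q)))
      (by unfold excessArea; fun_prop)
  have hzero : degLen F 0 1 (connectingCurve P P) = 0 := by
    simpa [connectingCurve, excessArea, ← Prod.zero_eq_mk] using
      degLen_bulgedSegment_zero F (P.1, P.2.1)
  simpa only [hzero] using hcont.tendsto P

end ConnectingCurve

section Distance

variable {F : ℝ × ℝ → ℝ}

theorem exists_joinsHorizontally_degLen_lt (F : ℝ × ℝ → ℝ) (P Q : ℝ × ℝ × ℝ) {a b ε : ℝ}
    (hab : a < b) (hε : 0 < ε) :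
    ∃ γ, JoinsHorizontally a b γ P Q ∧ degLen F a b γ < dCC F P Q + ε := by
  have hconn := joinsHorizontally_connectingCurve P Q
  obtain ⟨_, ⟨a', b', γ, hγ, harea, rfl⟩, hlt⟩ := exists_lt_of_csInf_lt
    (by exact ⟨_, 0, 1, connectingCurve P Q, hconn.1, hconn.2, rfl⟩)
    (lt_add_of_pos_right (dCC F P Q) hε)
  obtain ⟨η, hη, hlen⟩ := JoinsHorizontally.exists_degLen_eq ⟨hγ, harea⟩ F hab
  exact ⟨η, hη, hlen ▸ hlt⟩

theorem dCC_nonneg (hF : ∀ p, 0 ≤ F p) (P Q : ℝ × ℝ × ℝ) : 0 ≤ dCC F P Q := by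
  refine Real.sInf_nonneg ?_
  rintro _ ⟨a, b, γ, hγ, -, rfl⟩
  exact degLen_nonneg hF hγ.1 γ

theorem dCC_comm (F : ℝ × ℝ → ℝ) (P Q : ℝ × ℝ × ℝ) : dCC F P Q = dCC F Q P := by
  have hsub (P Q : ℝ × ℝ × ℝ) :
      {x | ∃ a b γ, IsCurve a b γ (P.1, P.2.1) (Q.1, Q.2.1) ∧
        sArea a b γ = Q.2.2 - P.2.2 ∧ degLen F a b γ = x} ⊆
      {x | ∃ a b γ, IsCurve a b γ (Q.1, Q.2.1) (P.1, P.2.1) ∧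
        sArea a b γ = P.2.2 - Q.2.2 ∧ degLen F a b γ = x} := by
    rintro _ ⟨a, b, γ, hγ, harea, rfl⟩
    have hrev := JoinsHorizontally.comp_neg ⟨hγ, harea⟩
    exact ⟨-b, -a, fun t => γ (-t), hrev.1, hrev.2, degLen_comp_neg F γ a b⟩
  exact congrArg sInf ((hsub P Q).antisymm (hsub Q P))

theorem dCC_triangle (hF₀ : ∀ p, 0 ≤ F p) (hF : Continuous F) (P Q R : ℝ × ℝ × ℝ) :
    dCC F P R ≤ dCC F P Q + dCC F Q R := by
  refine le_of_forall_pos_le_add fun ε hε => ?_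
  obtain ⟨γ, hγ, hγ_len⟩ := exists_joinsHorizontally_degLen_lt F P Q zero_lt_one (half_pos hε)
  obtain ⟨η, hη, hη_len⟩ := exists_joinsHorizontally_degLen_lt F Q R one_lt_two (half_pos hε)
  obtain ⟨ζ, hζ, hζγ, hζη⟩ := exists_locallyLipschitz_eqOn_Iic_eqOn_Ici hγ.locallyLipschitz
    hη.locallyLipschitz (hγ.apply_right.trans hη.apply_left.symm)
  have hζγ' : EqOn ζ γ (Icc 0 1) := hζγ.mono Icc_subset_Iic_self
  have hζη' : EqOn ζ η (Icc 1 2) := hζη.mono Icc_subset_Ici_self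
  calc dCC F P R ≤ degLen F 0 2 ζ := ((hγ.congr hζ hζγ').trans (hη.congr hζ hζη')).dCC_le hF₀
    _ = degLen F 0 1 γ + degLen F 1 2 η := by
        rw [← degLen_add_degLen hF hζ 0 1 2, degLen_congr F hγ.le hζγ', degLen_congr F hη.le hζη']
    _ ≤ dCC F P Q + dCC F Q R + ε := by linarith

theorem tendsto_dCC_self (hF₀ : ∀ p, 0 ≤ F p) (hF : Continuous F) (P : ℝ × ℝ × ℝ) :
    Tendsto (dCC F P) (𝓝 P) (𝓝 0) :=
  squeeze_zero (dCC_nonneg hF₀ P) (fun Q => (joinsHorizontally_connectingCurve P Q).dCC_le hF₀)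
    (tendsto_degLen_connectingCurve hF P)

theorem abs_dCC_sub_dCC_le (hF₀ : ∀ p, 0 ≤ F p) (hF : Continuous F) (P Q P' Q' : ℝ × ℝ × ℝ) :
    |dCC F P Q - dCC F P' Q'| ≤ dCC F P' P + dCC F Q' Q := by
  have tri := dCC_triangle hF₀ hF
  rw [abs_le]
  constructor <;> linarith [tri P' P Q', tri P Q Q', tri P P' Q, tri P' Q' Q, dCC_comm F P P',
    dCC_comm F Q Q']

theorem continuous_dCC (hF₀ : ∀ p, 0 ≤ F p) (hF : Continuous F) :
    Continuous fun X : (ℝ × ℝ × ℝ) × (ℝ × ℝ × ℝ) => dCC F X.1 X.2 := by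
  refine continuous_iff_continuousAt.2 fun ⟨P, Q⟩ => tendsto_iff_norm_sub_tendsto_zero.2 ?_
  refine squeeze_zero (fun _ => norm_nonneg _)
    (fun X => abs_dCC_sub_dCC_le hF₀ hF X.1 X.2 P Q) ?_
  simpa using ((tendsto_dCC_self hF₀ hF P).comp (continuous_fst.tendsto (P, Q))).add
    ((tendsto_dCC_self hF₀ hF Q).comp (continuous_snd.tendsto (P, Q)))

end Distance

theorem isBigO_principal_of_isCompact {X E G : Type*} [TopologicalSpace X] [NormedAddCommGroup E]
    [NormedAddCommGroup G] {f : X → E} {g : X → G} {K : Set X} (hK : IsCompact K)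
    (h : ∀ q ∈ K, f =O[𝓝 q] g) : f =O[𝓟 K] g := by
  refine hK.induction_on (p := fun s => f =O[𝓟 s] g) (by simp)
    (fun s t hst ht => ht.mono (principal_mono.2 hst)) (fun s t hs ht => ?_) fun q hq => ?_
  · rw [← sup_principal]
    exact hs.sup ht
  · obtain ⟨C, hC⟩ := (h q hq).bound
    exact ⟨_, mem_nhdsWithin_of_mem_nhds hC, isBigO_principal.2 ⟨C, fun _ hp => hp⟩⟩

section Jets

variable {E G : Type*} [NormedAddCommGroup E] [NormedSpace ℝ E] [NormedAddCommGroup G]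
  [NormedSpace ℝ G]

theorem exists_contDiff_fderiv_eq [FiniteDimensional ℝ E] (Z : Finset E) (L : E → E →L[ℝ] G) :
    ∃ g : E → G, ContDiff ℝ (⊤ : ℕ∞) g ∧ ∀ q ∈ Z, fderiv ℝ g q = L q := by
  classical
  induction Z using Finset.induction_on with
  | empty => exact ⟨fun _ => 0, contDiff_const, by simp⟩
  | insert q Z hq ih =>
    obtain ⟨g, hg, hgZ⟩ := ih
    obtain ⟨χ, hχZ, -, hχ, -, hχq⟩ := exists_contDiff_tsupport_subset (n := ⊤)
      (Z.finite_toSet.isClosed.isOpen_compl.mem_nhds (mem_compl (Finset.mem_coe.not.2 hq)))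
    set A := L q - fderiv ℝ g q
    have hg' (z : E) : DifferentiableAt ℝ g z := hg.differentiable (by simp) z
    have hcorr : ContDiff ℝ (⊤ : ℕ∞) fun p => χ p • A (p - q) := by fun_prop
    have hcorr' (z : E) : DifferentiableAt ℝ (fun p => χ p • A (p - q)) z :=
      hcorr.differentiable (by simp) z
    refine ⟨fun p => g p + χ p • A (p - q), hg.add hcorr, fun z hz => ?_⟩
    rw [fderiv_fun_add (hg' z) (hcorr' z)]
    rcases Finset.mem_insert.1 hz with rfl | hz
    · have hA : HasFDerivAt (fun p => A (p - z)) A z :=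
        A.hasFDerivAt.comp z ((hasFDerivAt_id z).sub_const z)
      have hχ' := (hχ.differentiable (by simp) z).hasFDerivAt
      rw [(hχ'.fun_smul hA).fderiv]
      simp [hχq, A]
    · have hzero : (fun p => χ p • A (p - q)) =ᶠ[𝓝 z] fun _ => 0 := by
        filter_upwards [notMem_tsupport_iff_eventuallyEq.1 fun h => hχZ h (Finset.mem_coe.2 hz)]
          with p hp
        rw [hp, Pi.zero_apply, zero_smul]
      rw [hzero.fderiv_eq, fderiv_fun_const, Pi.zero_apply, add_zero, hgZ z hz]

end Jets

/-- A planar weight that is continuous and nonnegative, grows at least linearly away from each of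
its zeros and is bounded away from zero near infinity. The model is `F = √W` for a
two-well potential `W`. -/
structure NondegenerateWeight (F : ℝ × ℝ → ℝ) : Prop where
  nonneg : ∀ p, 0 ≤ F p
  continuous : Continuous F
  isBigO_of_eq_zero : ∀ q, F q = 0 → (fun p => p - q) =O[𝓝 q] F
  coercive : ∃ c > 0, ∃ R : ℝ, ∀ p, R ≤ ‖p‖ → c ≤ F p

section PlanarBounds

variable {F : ℝ × ℝ → ℝ} {γ : ℝ → ℝ × ℝ} {a b : ℝ}

theorem norm_le_max_add_inv_mul_degLen (hF₀ : ∀ p, 0 ≤ F p) (hF : Continuous F)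
    (hγ : LocallyLipschitz γ) (hab : a ≤ b) {c R : ℝ} (hc : 0 < c)
    (hR : ∀ p, R ≤ ‖p‖ → c ≤ F p) :
    ‖γ b‖ ≤ max R ‖γ a‖ + c⁻¹ * degLen F a b γ := by
  set ρ := max R ‖γ a‖
  obtain ⟨s, ⟨hs, hsρ⟩, hlast⟩ :
      ∃ s, IsGreatest (Icc a b ∩ {t | ‖γ t‖ ≤ ρ}) s :=
    (isCompact_Icc.inter_right (isClosed_le hγ.continuous.norm continuous_const)).exists_isGreatest
      ⟨a, left_mem_Icc.2 hab, le_max_right R _⟩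
  have hweight : ∀ t ∈ Ioo s b, c ≤ F (γ t) := fun t ht => hR _ <| by
    by_contra! hlt
    exact ht.1.not_ge (hlast ⟨⟨hs.1.trans ht.1.le, ht.2.le⟩, hlt.le.trans (le_max_left R _)⟩)
  have hexit : c * ‖γ b - γ s‖ ≤ degLen F a b γ :=
    (mul_norm_sub_le_degLen hF hγ hs.2 hc.le hweight).trans (degLen_mono hF₀ hF hγ hs.1 le_rfl)
  calc ‖γ b‖ ≤ ‖γ s‖ + ‖γ b - γ s‖ := norm_le_norm_add_norm_sub' _ _
    _ ≤ ρ + c⁻¹ * degLen F a b γ := add_le_add hsρ ((le_inv_mul_iff₀ hc).2 hexit)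

theorem abs_sArea_sub_le_mul_degLen (hF₀ : ∀ p, 0 ≤ F p) (hF : Continuous F)
    (hγ : LocallyLipschitz γ) (hab : a ≤ b) {g : ℝ × ℝ → ℝ} (hg : ContDiff ℝ 1 g) {C : ℝ}
    (hC₀ : 0 ≤ C)
    (hC : ∀ t ∈ Icc a b, ∀ v, |(γ t).1 * v.2 - fderiv ℝ g (γ t) v| ≤ C * (F (γ t) * ‖v‖)) :
    |sArea a b γ - (g (γ b) - g (γ a))| ≤ C * degLen F a b γ := by
  have hgγ : LocallyLipschitz (g ∘ γ) := hg.locallyLipschitz.comp hγ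
  rw [sArea, ← Function.comp_apply (f := g), ← Function.comp_apply (f := g),
    ← integral_deriv_of_locallyLipschitz hgγ, ← intervalIntegral.integral_sub
      (intervalIntegrable_sArea hγ a b) (intervalIntegrable_deriv_of_locallyLipschitz hgγ a b),
    ← Real.norm_eq_abs, degLen, ← intervalIntegral.integral_const_mul]
  refine intervalIntegral.norm_integral_le_of_norm_le hab ?_
    ((intervalIntegrable_degLen hF hγ a b).const_mul C)
  filter_upwards [ae_differentiableAt_of_locallyLipschitz hγ] with t hdiff ht
  have hchain : deriv (g ∘ γ) t = fderiv ℝ g (γ t) (deriv γ t) :=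
    (((hg.differentiable one_ne_zero _).hasFDerivAt).comp_hasDerivAt t hdiff.hasDerivAt).deriv
  rw [deriv_snd hdiff, hchain]
  refine (hC t (Ioc_subset_Icc_self ht) _).trans ?_
  gcongr
  · exact hF₀ _
  · exact norm_le_enorm2 _

end PlanarBounds

namespace NondegenerateWeight

variable {F : ℝ × ℝ → ℝ}

theorem finite_setOf_eq_zero (hF : NondegenerateWeight F) : {p | F p = 0}.Finite := by
  obtain ⟨c, hc, R, hR⟩ := hF.coercive
  have hbdd : {p | F p = 0} ⊆ Metric.closedBall 0 R := fun p hp => by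
    rw [mem_closedBall_zero_iff]
    by_contra! hlt
    exact (hc.trans_le (hR p hlt.le)).ne' hp
  refine ((isCompact_closedBall _ _).of_isClosed_subset
    (isClosed_eq hF.continuous continuous_const) hbdd).finite ?_
  rw [isDiscrete_iff_nhdsNE]
  refine fun q hq => disjoint_iff.1 (disjoint_principal_right.2 ?_)
  filter_upwards [nhdsWithin_le_nhds (hF.isBigO_of_eq_zero q hq).eq_zero_imp,
    self_mem_nhdsWithin] with p himp hpq hp
  exact hpq (sub_eq_zero.1 (himp hp))

theorem isBigO_of_forall_eq_zero (hF : NondegenerateWeight F) {E : Type*} [NormedAddCommGroup E]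
    [NormedSpace ℝ E] {f : ℝ × ℝ → E} (hf : Differentiable ℝ f) (hf₀ : ∀ q, F q = 0 → f q = 0)
    (q : ℝ × ℝ) : f =O[𝓝 q] F := by
  by_cases hq : F q = 0
  · have h := (hf q).isBigO_sub
    simp only [hf₀ q hq, sub_zero] at h
    exact h.trans (hF.isBigO_of_eq_zero q hq)
  · have hlow : ∀ᶠ p in 𝓝 q, ‖F q‖ / 2 ≤ ‖F p‖ :=
      (hF.continuous.norm.tendsto q).eventually_const_le (half_lt_self (norm_pos_iff.2 hq))
    exact ((hf q).continuousAt.isBigO_one ℝ).trans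
      ((isBigO_const_left_iff_pos_le_norm one_ne_zero).2 ⟨_, half_pos (norm_pos_iff.2 hq), hlow⟩)

/-- The form `x dy` need not be `O(F)` at the zeros of `F`, but it is so after subtracting an exact
form `dg` agreeing with it at these finitely many points. -/
theorem exists_contDiff_abs_mul_sub_fderiv_le (hF : NondegenerateWeight F) {K : Set (ℝ × ℝ)}
    (hK : IsCompact K) :
    ∃ g : ℝ × ℝ → ℝ, ContDiff ℝ (⊤ : ℕ∞) g ∧ ∃ C ≥ 0, ∀ p ∈ K, ∀ v,
      |p.1 * v.2 - fderiv ℝ g p v| ≤ C * (F p * ‖v‖) := by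
  set areaForm : ℝ × ℝ → ℝ × ℝ →L[ℝ] ℝ := fun p => p.1 • ContinuousLinearMap.snd ℝ ℝ ℝ
  obtain ⟨g, hg, hgZ⟩ := exists_contDiff_fderiv_eq hF.finite_setOf_eq_zero.toFinset areaForm
  have hdiff : Differentiable ℝ fun p => areaForm p - fderiv ℝ g p :=
    (by fun_prop : Differentiable ℝ areaForm).sub
      ((hg.fderiv_right (m := 1) (by norm_cast)).differentiable one_ne_zero)
  have hzero (q : ℝ × ℝ) (hq : F q = 0) : areaForm q - fderiv ℝ g q = 0 :=
    sub_eq_zero.2 (hgZ q (by simpa using hq)).symm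
  obtain ⟨C, hC⟩ := isBigO_principal.1
    (isBigO_principal_of_isCompact hK fun q _ => hF.isBigO_of_forall_eq_zero hdiff hzero q)
  refine ⟨g, hg, max C 0, le_max_right C 0, fun p hp v => ?_⟩
  calc |p.1 * v.2 - fderiv ℝ g p v| = ‖(areaForm p - fderiv ℝ g p) v‖ := rfl
    _ ≤ ‖areaForm p - fderiv ℝ g p‖ * ‖v‖ := ContinuousLinearMap.le_opNorm _ v
    _ ≤ max C 0 * F p * ‖v‖ := by
        gcongr
        refine (hC p hp).trans ?_
        rw [Real.norm_of_nonneg (hF.nonneg p)]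
        exact mul_le_mul_of_nonneg_right (le_max_left C 0) (hF.nonneg p)
    _ = max C 0 * (F p * ‖v‖) := mul_assoc _ _ _

theorem exists_abs_sArea_le (hF : NondegenerateWeight F) (R M : ℝ) :
    ∃ B, ∀ γ a b, LocallyLipschitz γ → a ≤ b → (∀ t ∈ Icc a b, ‖γ t‖ ≤ R) →
      degLen F a b γ ≤ M → |sArea a b γ| ≤ B := by
  obtain ⟨g, hg, C, hC₀, hC⟩ :=
    hF.exists_contDiff_abs_mul_sub_fderiv_le (isCompact_closedBall (0 : ℝ × ℝ) R)
  obtain ⟨D, hD⟩ := (isCompact_closedBall (0 : ℝ × ℝ) R).exists_bound_of_continuousOn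
    hg.continuous.continuousOn
  refine ⟨C * M + (D + D), fun γ a b hγ hab hR hM => ?_⟩
  have hmem (t : ℝ) (ht : t ∈ Icc a b) : γ t ∈ Metric.closedBall 0 R :=
    mem_closedBall_zero_iff.2 (hR t ht)
  have hgb := hD _ (hmem b (right_mem_Icc.2 hab))
  have hga := hD _ (hmem a (left_mem_Icc.2 hab))
  calc |sArea a b γ|
      ≤ |sArea a b γ - (g (γ b) - g (γ a))| + |g (γ b) - g (γ a)| := by
        simpa using abs_add_le (sArea a b γ - (g (γ b) - g (γ a))) (g (γ b) - g (γ a))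
    _ ≤ C * degLen F a b γ + (|g (γ b)| + |g (γ a)|) :=
        add_le_add (abs_sArea_sub_le_mul_degLen hF.nonneg hF.continuous hγ hab (hg.of_le (by simp))
          hC₀ fun t ht => hC _ (hmem t ht)) (abs_sub _ _)
    _ ≤ C * M + (D + D) := by gcongr <;> assumption

theorem isBounded_setOf_dCC_le (hF : NondegenerateWeight F) (P : ℝ × ℝ × ℝ) (M : ℝ) :
    Bornology.IsBounded {Q | dCC F P Q ≤ M} := by
  obtain ⟨c, hc, R, hR⟩ := hF.coercive
  set ρ := max R ‖(P.1, P.2.1)‖ + c⁻¹ * (M + 1) with hρ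
  obtain ⟨B, hB⟩ := hF.exists_abs_sArea_le ρ (M + 1)
  refine isBounded_iff_forall_norm_le.2 ⟨max ρ (|P.2.2| + B), fun Q hQ => ?_⟩
  obtain ⟨γ, hγ, hlt⟩ := exists_joinsHorizontally_degLen_lt F P Q zero_lt_one zero_lt_one
  have hlen : degLen F 0 1 γ ≤ M + 1 := hlt.le.trans (add_le_add_left hQ 1)
  have hplane (t : ℝ) (ht : t ∈ Icc (0 : ℝ) 1) : ‖γ t‖ ≤ ρ := by
    refine (norm_le_max_add_inv_mul_degLen hF.nonneg hF.continuous hγ.locallyLipschitz ht.1 hc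
      hR).trans ?_
    rw [hγ.apply_left, hρ]
    gcongr
    exact (degLen_mono hF.nonneg hF.continuous hγ.locallyLipschitz le_rfl ht.2).trans hlen
  have hheight : |Q.2.2| ≤ |P.2.2| + B := by
    have harea := hB γ 0 1 hγ.locallyLipschitz zero_le_one hplane hlen
    rw [hγ.2] at harea
    linarith [abs_sub_abs_le_abs_sub Q.2.2 P.2.2]
  have hend := hγ.apply_right ▸ hplane 1 (right_mem_Icc.2 zero_le_one)
  have h₁ : ‖Q.1‖ ≤ ρ := (norm_fst_le (Q.1, Q.2.1)).trans hend
  have h₂ : ‖Q.2.1‖ ≤ ρ := (norm_snd_le (Q.1, Q.2.1)).trans hend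
  exact max_le (h₁.trans (le_max_left _ _)) (max_le (h₂.trans (le_max_left _ _))
    (hheight.trans (le_max_right _ _)))

end NondegenerateWeight

section Compactness

open scoped unitInterval

theorem exists_unitInterval_reparametrization {f : I → ℝ} (hf : Continuous f) :
    ∃ τ : I → I, τ 0 = 0 ∧ τ 1 = 1 ∧ ∀ s : I, f (τ s) = f 0 + s * (f 1 - f 0) := by
  have hivt (s : I) : ∃ t, (s = 0 → t = 0) ∧ (s = 1 → t = 1) ∧ f t = f 0 + s * (f 1 - f 0) := by
    rcases eq_or_ne s 0 with rfl | hs₀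
    · exact ⟨0, by simp⟩
    rcases eq_or_ne s 1 with rfl | hs₁
    · exact ⟨1, by simp⟩
    have hmem : f 0 + s * (f 1 - f 0) ∈ uIcc (f 0) (f 1) := by
      rw [← segment_eq_uIcc]
      exact ⟨1 - s, s, unitInterval.one_minus_nonneg s, unitInterval.nonneg s, by ring,
        by simp only [smul_eq_mul]; ring⟩
    obtain ⟨t, -, ht⟩ := intermediate_value_uIcc hf.continuousOn hmem
    exact ⟨t, fun h => (hs₀ h).elim, fun h => (hs₁ h).elim, ht⟩
  choose τ hτ₀ hτ₁ hτ using hivt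
  exact ⟨τ, hτ₀ 0 rfl, hτ₁ 1 rfl, hτ⟩

theorem exists_limit_le_mul {X T : Type*} [TopologicalSpace X] {d : X → X → ℝ}
    (hd : Continuous fun x : X × X => d x.1 x.2) {K : Set X} (hK : IsCompact K)
    {x : ℕ → T → X} (hx : ∀ n t, x n t ∈ K) {ρ : T → T → ℝ} {L : ℕ → ℝ} {l : ℝ}
    (hL : Tendsto L atTop (𝓝 l)) (hbound : ∀ n s t, d (x n s) (x n t) ≤ L n * ρ s t) :
    ∃ y : T → X, (∀ t, y t ∈ closure (range fun n => x n t)) ∧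
      ∀ s t, d (y s) (y t) ≤ l * ρ s t := by
  have hlim (t : T) : ∃ z, Tendsto (fun n => x n t) (hyperfilter ℕ) (𝓝 z) := by
    obtain ⟨z, -, hz⟩ := hK.ultrafilter_le_nhds ((hyperfilter ℕ).map fun n => x n t)
      (le_principal_iff.2 (mem_map.2 (univ_mem' fun n => hx n t)))
    exact ⟨z, hz⟩
  choose y hy using hlim
  refine ⟨y, fun t => mem_closure_of_tendsto (hy t) (Eventually.of_forall mem_range_self),
    fun s t => ?_⟩
  have hL' : Tendsto L (hyperfilter ℕ) (𝓝 l) := hL.mono_left Nat.hyperfilter_le_atTop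
  exact le_of_tendsto_of_tendsto' ((hd.tendsto (y s, y t)).comp ((hy s).prodMk_nhds (hy t)))
    (hL'.mul_const _) fun n => hbound n s t

end Compactness

section Geodesics

open scoped unitInterval

variable {F : ℝ × ℝ → ℝ}

theorem dCC_horizontalLift_le {γ : ℝ → ℝ × ℝ} (hF₀ : ∀ p, 0 ≤ F p) (hF : Continuous F)
    (hγ : LocallyLipschitz γ) (z a s t : ℝ) :
    dCC F (horizontalLift z a γ s) (horizontalLift z a γ t) ≤
      |degLen F a s γ - degLen F a t γ| := by
  wlog hst : s ≤ t generalizing s t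
  · rw [dCC_comm, abs_sub_comm]
    exact this t s (le_of_not_ge hst)
  calc _ ≤ degLen F s t γ := (joinsHorizontally_horizontalLift hγ z a hst).dCC_le hF₀
    _ = degLen F a t γ - degLen F a s γ := by
        rw [← degLen_add_degLen hF hγ a s t, add_sub_cancel_left]
    _ ≤ |degLen F a s γ - degLen F a t γ| := by
        rw [abs_sub_comm]
        exact le_abs_self _

theorem exists_dCC_le_add_mul_abs_sub (hF₀ : ∀ p, 0 ≤ F p) (hF : Continuous F)
    (P Q : ℝ × ℝ × ℝ) {ε : ℝ} (hε : 0 < ε) :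
    ∃ Γ : I → ℝ × ℝ × ℝ, Γ 0 = P ∧ Γ 1 = Q ∧
      ∀ s t : I, dCC F (Γ s) (Γ t) ≤ (dCC F P Q + ε) * |(s : ℝ) - t| := by
  obtain ⟨γ, hγ, hlt⟩ := exists_joinsHorizontally_degLen_lt F P Q zero_lt_one hε
  obtain ⟨τ, hτ₀, hτ₁, hτ⟩ := exists_unitInterval_reparametrization
    (f := fun t : I => degLen F 0 t γ)
    ((continuous_degLen hF hγ.locallyLipschitz 0).comp continuous_subtype_val)
  have hconst (s : I) : degLen F 0 (τ s) γ = s * degLen F 0 1 γ := by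
    simpa [degLen] using hτ s
  refine ⟨fun s => horizontalLift P.2.2 0 γ (τ s), ?_, ?_, fun s t => ?_⟩
  · simpa [hτ₀] using hγ.horizontalLift_left
  · simpa [hτ₁] using hγ.horizontalLift_right
  · calc _ ≤ |degLen F 0 (τ s) γ - degLen F 0 (τ t) γ| :=
          dCC_horizontalLift_le hF₀ hF hγ.locallyLipschitz _ _ _ _
      _ = degLen F 0 1 γ * |(s : ℝ) - t| := by
          rw [hconst, hconst, ← sub_mul, abs_mul, abs_of_nonneg (degLen_nonneg hF₀ hγ.le γ),
            mul_comm]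
      _ ≤ (dCC F P Q + ε) * |(s : ℝ) - t| := by gcongr

theorem NondegenerateWeight.exists_dCC_le_mul_abs_sub (hF : NondegenerateWeight F)
    (P Q : ℝ × ℝ × ℝ) :
    ∃ Γ : ℝ → ℝ × ℝ × ℝ, Γ 0 = P ∧ Γ 1 = Q ∧ ∀ s ∈ Icc (0 : ℝ) 1, ∀ t ∈ Icc (0 : ℝ) 1,
      dCC F (Γ s) (Γ t) ≤ dCC F P Q * |s - t| := by
  choose Γ hΓ₀ hΓ₁ hΓ using fun n : ℕ => exists_dCC_le_add_mul_abs_sub hF.nonneg hF.continuous P Q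
    (one_div_pos.2 (n.cast_add_one_pos (α := ℝ)))
  have hmem (n : ℕ) (t : I) : Γ n t ∈ closure {R | dCC F P R ≤ dCC F P Q + 1} := by
    have htime : |((0 : I) : ℝ) - t| ≤ 1 := by
      simpa [abs_of_nonneg (unitInterval.nonneg t)] using unitInterval.le_one t
    have hspeed : dCC F P Q + 1 / ((n : ℝ) + 1) ≤ dCC F P Q + 1 := by
      gcongr
      exact div_le_one_of_le₀ (by simp) (by positivity)
    refine subset_closure ((hΓ₀ n ▸ hΓ n 0 t).trans ?_)
    simpa using mul_le_mul hspeed htime (abs_nonneg _)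
      (add_nonneg (dCC_nonneg hF.nonneg P Q) zero_le_one)
  have hspeed : Tendsto (fun n : ℕ => dCC F P Q + 1 / ((n : ℝ) + 1)) atTop (𝓝 (dCC F P Q)) := by
    simpa using tendsto_one_div_add_atTop_nhds_zero_nat.const_add (dCC F P Q)
  obtain ⟨Γlim, hclosure, hlip⟩ := exists_limit_le_mul (continuous_dCC hF.nonneg hF.continuous)
    (hF.isBounded_setOf_dCC_le P _).isCompact_closure hmem hspeed hΓ
  refine ⟨IccExtend zero_le_one Γlim, ?_, ?_, fun s hs t ht => ?_⟩
  · simpa [hΓ₀] using hclosure 0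
  · simpa [hΓ₁] using hclosure 1
  · simpa only [IccExtend_of_mem _ _ hs, IccExtend_of_mem _ _ ht] using hlip ⟨s, hs⟩ ⟨t, ht⟩

theorem sum_fin_succ_sub_castSucc {A : Type*} [AddCommGroup A] (n : ℕ) (t : Fin (n + 1) → A) :
    ∑ i : Fin n, (t i.succ - t i.castSucc) = t (Fin.last n) - t 0 := by
  rw [Finset.sum_sub_distrib, sub_eq_sub_iff_add_eq_add, add_comm, ← Fin.sum_univ_succ,
    Fin.sum_univ_castSucc, add_comm]

theorem pathLen_eq_of_dCC_le_mul_abs_sub {Γ : ℝ → ℝ × ℝ × ℝ}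
    (hΓ : ∀ s ∈ Icc (0 : ℝ) 1, ∀ t ∈ Icc (0 : ℝ) 1,
      dCC F (Γ s) (Γ t) ≤ dCC F (Γ 0) (Γ 1) * |s - t|) :
    pathLen F 0 1 Γ = dCC F (Γ 0) (Γ 1) := by
  refine IsGreatest.csSup_eq ⟨⟨1, ![0, 1], ?_, by simp, by simp [Fin.last], by simp⟩, ?_⟩
  · simp [Fin.monotone_iff_le_succ]
  · rintro x ⟨n, t, hmono, ht₀, ht₁, rfl⟩
    have hmem (i : Fin (n + 1)) : t i ∈ Icc (0 : ℝ) 1 :=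
      ⟨ht₀ ▸ hmono (Fin.zero_le i), ht₁ ▸ hmono (Fin.le_last i)⟩
    calc ∑ i : Fin n, dCC F (Γ (t i.castSucc)) (Γ (t i.succ))
        ≤ ∑ i : Fin n, dCC F (Γ 0) (Γ 1) * (t i.succ - t i.castSucc) := by
          refine Finset.sum_le_sum fun i _ => (hΓ _ (hmem _) _ (hmem _)).trans_eq ?_
          rw [abs_sub_comm, abs_of_nonneg (sub_nonneg.2 (hmono Fin.castSucc_lt_succ.le))]
      _ = dCC F (Γ 0) (Γ 1) := by
          rw [← Finset.mul_sum, sum_fin_succ_sub_castSucc, ht₀, ht₁, sub_zero, mul_one]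

end Geodesics

section Approximation

variable {F : ℝ × ℝ → ℝ} {Γ : ℝ → ℝ × ℝ × ℝ} {L : ℝ}

theorem exists_joinsHorizontally_chain (F : ℝ × ℝ → ℝ) {u : ℕ → ℝ} (hu : StrictMono u)
    (x : ℕ → ℝ × ℝ × ℝ) {ε : ℝ} (hε : 0 < ε) (n : ℕ) :
    ∃ γ, (∀ i ≤ n, JoinsHorizontally (u 0) (u i) γ (x 0) (x i)) ∧
      ∀ i < n, degLen F (u i) (u (i + 1)) γ ≤ dCC F (x i) (x (i + 1)) + ε := by
  induction n with
  | zero =>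
    refine ⟨fun _ => ((x 0).1, (x 0).2.1), fun i hi => ?_, by simp⟩
    obtain rfl := Nat.le_zero.1 hi
    exact .const _ _
  | succ n ih =>
    obtain ⟨γ, hγ, hlen⟩ := ih
    obtain ⟨η, hη, hηlen⟩ :=
      exists_joinsHorizontally_degLen_lt F (x n) (x (n + 1)) (hu n.lt_succ_self) hε
    obtain ⟨ζ, hζ, hζγ, hζη⟩ := exists_locallyLipschitz_eqOn_Iic_eqOn_Ici
      (hγ n le_rfl).locallyLipschitz hη.locallyLipschitz
      ((hγ n le_rfl).apply_right.trans hη.apply_left.symm)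
    have hinit (s : ℝ) {i : ℕ} (hi : i ≤ n) : EqOn ζ γ (Icc s (u i)) :=
      hζγ.mono fun t ht => ht.2.trans (hu.monotone hi)
    have hlast : EqOn ζ η (Icc (u n) (u (n + 1))) := hζη.mono fun t ht => ht.1
    refine ⟨ζ, fun i hi => ?_, fun i hi => ?_⟩
    · rcases Nat.le_succ_iff.1 hi with hi | rfl
      · exact (hγ i hi).congr hζ (hinit _ hi)
      · exact ((hγ n le_rfl).congr hζ (hinit _ le_rfl)).trans (hη.congr hζ hlast)
    · rcases Nat.lt_succ_iff_lt_or_eq.1 hi with hi | rfl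
      · exact (degLen_congr F (hu i.lt_succ_self).le (hinit _ hi)).trans_le (hlen i hi)
      · exact (degLen_congr F (hu i.lt_succ_self).le hlast).trans_le hηlen.le

theorem exists_joinsHorizontally_degLen_le_div
    (hΓ : ∀ s ∈ Icc (0 : ℝ) 1, ∀ t ∈ Icc (0 : ℝ) 1, dCC F (Γ s) (Γ t) ≤ L * |s - t|)
    {δ : ℝ} (hδ : 0 < δ) {n : ℕ} (hn : 0 < n) :
    ∃ γ, (∀ i ≤ n, JoinsHorizontally 0 (i / n) γ (Γ 0) (Γ (i / n))) ∧
      ∀ i < n, degLen F (i / n) ((i + 1) / n) γ ≤ (L + δ) / n := by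
  have hn' : (0 : ℝ) < n := Nat.cast_pos.2 hn
  have hmem {i : ℕ} (hi : i ≤ n) : (i / n : ℝ) ∈ Icc (0 : ℝ) 1 :=
    ⟨by positivity, (div_le_one hn').2 (Nat.cast_le.2 hi)⟩
  obtain ⟨γ, hγ, hlen⟩ := exists_joinsHorizontally_chain F (u := fun i => i / n)
    (fun i k hik => div_lt_div_of_pos_right (Nat.cast_lt.2 hik) hn') (fun i => Γ (i / n))
    (div_pos hδ hn') n
  refine ⟨γ, by simpa using hγ, fun i hi => ?_⟩
  have hgap : |(i / n : ℝ) - (i + 1 : ℕ) / n| = 1 / n := by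
    rw [abs_sub_comm, ← sub_div, Nat.cast_succ, add_sub_cancel_left, abs_of_pos (by positivity)]
  have hstep := hΓ _ (hmem hi.le) _ (hmem hi)
  rw [hgap, mul_one_div] at hstep
  simpa [add_div] using (hlen i hi).trans (add_le_add_left hstep _)

theorem degLen_zero_one_le_of_forall_degLen_div_le {γ : ℝ → ℝ × ℝ} (hF : Continuous F)
    (hγ : LocallyLipschitz γ) {n : ℕ} (hn : 0 < n)
    (hL : ∀ i < n, degLen F (i / n) ((i + 1) / n) γ ≤ L / n) : degLen F 0 1 γ ≤ L := by
  have hn' : (n : ℝ) ≠ 0 := by positivity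
  have hsum := intervalIntegral.sum_integral_adjacent_intervals (a := fun i : ℕ => (i / n : ℝ))
    (n := n) fun i _ => intervalIntegrable_degLen hF hγ _ _
  calc degLen F 0 1 γ = ∑ i ∈ Finset.range n, degLen F (i / n) ((i + 1) / n) γ := by
        simpa [degLen, hn'] using hsum.symm
    _ ≤ ∑ _i ∈ Finset.range n, L / n := Finset.sum_le_sum fun i hi => hL i (Finset.mem_range.1 hi)
    _ = L := by rw [Finset.sum_const, Finset.card_range, nsmul_eq_mul, mul_div_cancel₀ _ hn']

theorem exists_mem_Icc_div {n : ℕ} (hn : 0 < n) {t : ℝ} (ht : t ∈ Icc (0 : ℝ) 1) :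
    ∃ i < n, t ∈ Icc (i / n : ℝ) ((i + 1) / n) := by
  have hn' : (0 : ℝ) < n := Nat.cast_pos.2 hn
  rcases ht.2.eq_or_lt with rfl | ht₁
  · refine ⟨n - 1, Nat.pred_lt hn.ne', ?_⟩
    rw [Nat.cast_pred hn, sub_add_cancel, div_self hn'.ne', mem_Icc, div_le_one hn']
    exact ⟨by linarith, le_rfl⟩
  · have hnt : 0 ≤ t * n := mul_nonneg ht.1 hn'.le
    exact ⟨⌊t * n⌋₊, (Nat.floor_lt hnt).2 (mul_lt_of_lt_one_left hn' ht₁),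
      (div_le_iff₀ hn').2 (Nat.floor_le hnt), (le_div_iff₀ hn').2 (Nat.lt_floor_add_one _).le⟩

theorem exists_admissible_dCC_le (hF₀ : ∀ p, 0 ≤ F p) (hF : Continuous F) (hL : 0 ≤ L)
    (hΓ : ∀ s ∈ Icc (0 : ℝ) 1, ∀ t ∈ Icc (0 : ℝ) 1, dCC F (Γ s) (Γ t) ≤ L * |s - t|)
    {δ : ℝ} (hδ : 0 < δ) :
    ∃ Γ' : ℝ → ℝ × ℝ × ℝ, (LocallyLipschitz Γ' ∧ Admissible 0 1 Γ' ∧ Γ' 0 = Γ 0 ∧ Γ' 1 = Γ 1) ∧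
      dCC F (Γ 0) (Γ 1) ≤ degLen F 0 1 (projCurve Γ') ∧
      degLen F 0 1 (projCurve Γ') ≤ L + δ ∧
      ∀ t ∈ Icc (0 : ℝ) 1, dCC F (Γ' t) (Γ t) ≤ δ := by
  obtain ⟨n, hn⟩ := exists_nat_gt ((2 * L + δ) / δ)
  have hn' : (0 : ℝ) < n := lt_of_le_of_lt (by positivity) hn
  obtain ⟨γ, hγ, hlen⟩ := exists_joinsHorizontally_degLen_le_div hΓ hδ (Nat.cast_pos.1 hn')
  have hγ₁ : JoinsHorizontally 0 1 γ (Γ 0) (Γ 1) := by simpa [hn'.ne'] using hγ n le_rfl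
  have hγlip := hγ₁.locallyLipschitz
  refine ⟨horizontalLift (Γ 0).2.2 0 γ, ⟨locallyLipschitz_horizontalLift hγlip _ _,
    admissible_horizontalLift hγlip _ _ _, hγ₁.horizontalLift_left, hγ₁.horizontalLift_right⟩,
    hγ₁.dCC_le hF₀, degLen_zero_one_le_of_forall_degLen_div_le hF hγlip (Nat.cast_pos.1 hn') hlen,
    fun t ht => ?_⟩
  obtain ⟨i, hi, hit⟩ := exists_mem_Icc_div (Nat.cast_pos.1 hn') ht
  have hlift : dCC F (horizontalLift (Γ 0).2.2 0 γ t) (Γ (i / n)) ≤ (L + δ) / n := by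
    rw [dCC_comm, ← (hγ i hi.le).horizontalLift_right]
    exact ((joinsHorizontally_horizontalLift hγlip _ _ hit.1).dCC_le hF₀).trans
      ((degLen_mono hF₀ hF hγlip le_rfl hit.2).trans (hlen i hi))
  have htime : |i / n - t| ≤ 1 / n := by
    rw [add_div] at hit
    exact abs_sub_le_iff.2 ⟨by linarith [hit.1, one_div_pos.2 hn'], by linarith [hit.2]⟩
  have hcurve : dCC F (Γ (i / n)) (Γ t) ≤ L / n :=
    (hΓ _ ⟨by positivity, hit.1.trans ht.2⟩ t ht).trans
      ((mul_le_mul_of_nonneg_left htime hL).trans_eq (mul_one_div L n))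
  calc dCC F (horizontalLift (Γ 0).2.2 0 γ t) (Γ t)
      ≤ (L + δ) / n + L / n :=
        (dCC_triangle hF₀ hF _ (Γ (i / n)) _).trans (add_le_add hlift hcurve)
    _ = (2 * L + δ) / n := by ring
    _ ≤ δ := (div_le_comm₀ hδ hn').1 hn.le

end Approximation

section Hessian

variable {E : Type*} [NormedAddCommGroup E] [NormedSpace ℝ E] {f : E → ℝ} {q : E}

theorem isCoercive_of_forall_pos [FiniteDimensional ℝ E] {H : E →L[ℝ] E →L[ℝ] ℝ}
    (hH : ∀ v ≠ 0, 0 < H v v) : IsCoercive H := by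
  cases subsingleton_or_nontrivial E
  · exact ⟨1, one_pos, fun v => by simp [Subsingleton.elim v 0]⟩
  obtain ⟨u, hu, hmin⟩ := (isCompact_sphere (0 : E) 1).exists_isMinOn
    (NormedSpace.sphere_nonempty.2 zero_le_one) (f := fun v => H v v) (by fun_prop)
  refine ⟨H u u, hH u (ne_zero_of_mem_unit_sphere ⟨u, hu⟩), fun v => ?_⟩
  rcases eq_or_ne v 0 with rfl | hv
  · simp
  have hnorm : ‖v‖ ≠ 0 := norm_ne_zero_iff.2 hv
  have hunit : H u u ≤ ‖v‖⁻¹ * (‖v‖⁻¹ * H v v) := by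
    simpa using hmin (show ‖v‖⁻¹ • v ∈ Metric.sphere 0 1 by simp [norm_smul, hnorm])
  calc H u u * ‖v‖ * ‖v‖ ≤ ‖v‖⁻¹ * (‖v‖⁻¹ * H v v) * ‖v‖ * ‖v‖ := by gcongr
    _ = H v v := by field_simp

theorem exists_mul_sq_norm_le_fderiv_apply_sub (hf : DifferentiableAt ℝ (fderiv ℝ f) q)
    (hcrit : fderiv ℝ f q = 0) (hH : IsCoercive (fderiv ℝ (fderiv ℝ f) q)) :
    ∃ c > 0, ∀ᶠ p in 𝓝 q, c * ‖p - q‖ ^ 2 ≤ fderiv ℝ f p (p - q) := by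
  obtain ⟨m, hm, hlow⟩ := hH
  refine ⟨m / 2, half_pos hm, ?_⟩
  filter_upwards [hf.hasFDerivAt.isLittleO.def (half_pos hm)] with p hp
  rw [hcrit, sub_zero] at hp
  have herr := ContinuousLinearMap.le_of_opNorm_le _ hp (p - q)
  rw [sub_apply, Real.norm_eq_abs] at herr
  linarith [(abs_le.1 herr).1, hlow (p - q)]

theorem add_mul_sq_norm_le_of_mul_sq_norm_le_fderiv {S : Set E} (hS : StarConvex ℝ q S)
    (hf : ∀ p ∈ S, DifferentiableAt ℝ f p) {c : ℝ}
    (hc : ∀ p ∈ S, c * ‖p - q‖ ^ 2 ≤ fderiv ℝ f p (p - q)) {p : E} (hp : p ∈ S) :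
    f q + c / 2 * ‖p - q‖ ^ 2 ≤ f p := by
  set v := p - q with hv
  have hmem {s : ℝ} (hs : s ∈ Icc (0 : ℝ) 1) : q + s • v ∈ S := hS.add_smul_sub_mem hp hs.1 hs.2
  have hderiv {s : ℝ} (hs : s ∈ Icc (0 : ℝ) 1) :
      HasDerivAt (fun s => f (q + s • v) - c / 2 * ‖v‖ ^ 2 * s ^ 2)
        (fderiv ℝ f (q + s • v) v - c * ‖v‖ ^ 2 * s) s := by
    have hline : HasDerivAt (fun s : ℝ => q + s • v) v s := by
      simpa using ((hasDerivAt_id s).smul_const v).const_add q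
    refine (((hf _ (hmem hs)).hasFDerivAt.comp_hasDerivAt s hline).sub
      ((hasDerivAt_pow 2 s).const_mul (c / 2 * ‖v‖ ^ 2))).congr_deriv ?_
    rw [Nat.cast_ofNat, pow_one]
    ring
  have hmono : MonotoneOn (fun s => f (q + s • v) - c / 2 * ‖v‖ ^ 2 * s ^ 2) (Icc 0 1) := by
    refine monotoneOn_of_deriv_nonneg (convex_Icc 0 1)
      (fun s hs => (hderiv hs).continuousAt.continuousWithinAt)
      (fun s hs => (hderiv (interior_subset hs)).differentiableAt.differentiableWithinAt) ?_
    intro s hs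
    rw [(hderiv (interior_subset hs)).deriv, sub_nonneg]
    rw [interior_Icc] at hs
    refine le_of_mul_le_mul_left ?_ hs.1
    have hcs := hc _ (hmem (Ioo_subset_Icc_self hs))
    rw [add_sub_cancel_left, norm_smul, Real.norm_of_nonneg hs.1.le, map_smul, smul_eq_mul] at hcs
    linarith
  have hends := hmono (left_mem_Icc.2 zero_le_one) (right_mem_Icc.2 zero_le_one) zero_le_one
  simp only [zero_smul, add_zero, one_smul, hv, add_sub_cancel] at hends
  linarith

theorem isBigO_sub_sqrt_of_hessian_pos [FiniteDimensional ℝ E] (hf : ContDiffAt ℝ 2 f q)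
    (hmin : IsLocalMin f q) (hH : ∀ v ≠ 0, 0 < iteratedFDeriv ℝ 2 f q ![v, v]) :
    (fun p => p - q) =O[𝓝 q] fun p => √(f p - f q) := by
  have hcoercive : IsCoercive (fderiv ℝ (fderiv ℝ f) q) :=
    isCoercive_of_forall_pos fun v hv => by simpa [iteratedFDeriv_two_apply] using hH v hv
  obtain ⟨c, hc, hgrad⟩ := exists_mul_sq_norm_le_fderiv_apply_sub
    ((hf.fderiv_right (m := 1) (by norm_num)).differentiableAt one_ne_zero)
    hmin.fderiv_eq_zero hcoercive
  have hdiff : ∀ᶠ p in 𝓝 q, DifferentiableAt ℝ f p :=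
    (hf.eventually (by simp)).mono fun p hp => hp.differentiableAt two_ne_zero
  obtain ⟨δ, hδ, hball⟩ := Metric.eventually_nhds_iff_ball.1 (hdiff.and hgrad)
  refine .of_bound (√(c / 2))⁻¹ ?_
  filter_upwards [Metric.ball_mem_nhds q hδ] with p hp
  have hgrowth : c / 2 * ‖p - q‖ ^ 2 ≤ f p - f q := le_sub_iff_add_le'.2 <|
    add_mul_sq_norm_le_of_mul_sq_norm_le_fderiv
      ((convex_ball q δ).starConvex (Metric.mem_ball_self hδ)) (fun p hp => (hball p hp).1)
      (fun p hp => (hball p hp).2) hp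
  rw [le_inv_mul_iff₀ (by positivity), Real.norm_of_nonneg (Real.sqrt_nonneg _)]
  calc √(c / 2) * ‖p - q‖ = √(c / 2 * ‖p - q‖ ^ 2) := by
        rw [Real.sqrt_mul (half_pos hc).le, Real.sqrt_sq (norm_nonneg _)]
    _ ≤ √(f p - f q) := Real.sqrt_le_sqrt hgrowth

end Hessian

theorem TwoWell.nondegenerateWeight_sqrt {W : ℝ × ℝ → ℝ} {pm pp : ℝ × ℝ} (hW : TwoWell W pm pp) :
    NondegenerateWeight fun p => √(W p) where
  nonneg p := Real.sqrt_nonneg _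
  continuous := hW.smooth.continuous.sqrt
  isBigO_of_eq_zero q hq := by
    have hWq : W q = 0 := (Real.sqrt_eq_zero (hW.nonneg q)).1 hq
    have hmin : IsLocalMin W q := Eventually.of_forall fun p => hWq ▸ hW.nonneg p
    have hhess : ∀ v : ℝ × ℝ, v ≠ 0 → 0 < iteratedFDeriv ℝ 2 W q ![v, v] := by
      rcases (hW.zeroSet q).1 hWq with rfl | rfl
      exacts [hW.hess_m, hW.hess_p]
    simpa [hWq] using
      isBigO_sub_sqrt_of_hessian_pos (hW.smooth.contDiffAt.of_le (by norm_cast)) hmin hhess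
  coercive := by
    obtain ⟨c, hc, R, hR⟩ := hW.coercive
    exact ⟨√c, Real.sqrt_pos.2 hc, R, fun p hp => Real.sqrt_le_sqrt (hR p hp)⟩

theorem exists_minimizing_geodesic_general {F : ℝ × ℝ → ℝ} (hF : NondegenerateWeight F)
    (P Q : ℝ × ℝ × ℝ) :
    ∃ Γ : ℝ → ℝ × ℝ × ℝ,
      (∃ K : ℝ, ∀ s ∈ Icc (0 : ℝ) 1, ∀ t ∈ Icc (0 : ℝ) 1, dCC F (Γ s) (Γ t) ≤ K * |s - t|) ∧
      Γ 0 = P ∧ Γ 1 = Q ∧ pathLen F 0 1 Γ = dCC F P Q ∧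
      ∃ Γseq : ℕ → ℝ → ℝ × ℝ × ℝ,
        (∀ j, LocallyLipschitz (Γseq j) ∧ Admissible 0 1 (Γseq j) ∧
          Γseq j 0 = P ∧ Γseq j 1 = Q) ∧
        Tendsto (fun j => degLen F 0 1 (projCurve (Γseq j))) atTop (𝓝 (dCC F P Q)) ∧
        (∀ ε > 0, ∃ N : ℕ, ∀ j ≥ N, ∀ t ∈ Icc (0 : ℝ) 1, dCC F (Γseq j t) (Γ t) < ε) := by
  obtain ⟨Γ, rfl, rfl, hΓ⟩ := hF.exists_dCC_le_mul_abs_sub P Q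
  choose Γseq hjoin hlower hupper hnear using fun j : ℕ =>
    exists_admissible_dCC_le hF.nonneg hF.continuous (dCC_nonneg hF.nonneg _ _) hΓ
      (one_div_pos.2 (j.cast_add_one_pos (α := ℝ)))
  have herror : Tendsto (fun j : ℕ => 1 / ((j : ℝ) + 1)) atTop (𝓝 0) :=
    tendsto_one_div_add_atTop_nhds_zero_nat
  refine ⟨Γ, ⟨_, hΓ⟩, rfl, rfl, pathLen_eq_of_dCC_le_mul_abs_sub hΓ, Γseq, hjoin, ?_,
    fun ε hε => ?_⟩
  · exact tendsto_of_tendsto_of_tendsto_of_le_of_le tendsto_const_nhds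
      (by simpa using herror.const_add (dCC F (Γ 0) (Γ 1))) hlower hupper
  · obtain ⟨N, hN⟩ := eventually_atTop.1 (herror.eventually (gt_mem_nhds hε))
    exact ⟨N, fun j hj t ht => (hnear j t ht).trans_lt (hN j hj)⟩

/-- for every pair of points `P, Q ∈ ℝ³` there is a minimizing geodesic `Γ` from
`P` to `Q`: `Γ` is Lipschitz for the metric `d_F`, has `L(Γ) = d_F(P,Q)`, and is the uniform
limit in `d_F` of admissible locally Lipschitz curves joining `P` to `Q` whose degenerate
lengths converge to `d_F(P,Q)`. -/
theorem exists_minimizing_geodesic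
    (W : ℝ × ℝ → ℝ) (pm pp : ℝ × ℝ) (hW : TwoWell W pm pp)
    (F : ℝ × ℝ → ℝ) (hF : F = fun p => Real.sqrt (W p)) (P Q : ℝ × ℝ × ℝ) :
    ∃ Γ : ℝ → ℝ × ℝ × ℝ,
      (∃ K : ℝ, ∀ s ∈ Set.Icc (0:ℝ) 1, ∀ t ∈ Set.Icc (0:ℝ) 1,
        dCC F (Γ s) (Γ t) ≤ K * |s - t|) ∧
      Γ 0 = P ∧ Γ 1 = Q ∧ pathLen F 0 1 Γ = dCC F P Q ∧
      ∃ Γseq : ℕ → ℝ → ℝ × ℝ × ℝ,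
        (∀ j, LocallyLipschitz (Γseq j) ∧ Admissible 0 1 (Γseq j) ∧
          Γseq j 0 = P ∧ Γseq j 1 = Q) ∧
        Tendsto (fun j => degLen F 0 1 (projCurve (Γseq j))) atTop (𝓝 (dCC F P Q)) ∧
        (∀ ε > 0, ∃ N : ℕ, ∀ j ≥ N, ∀ t ∈ Set.Icc (0:ℝ) 1, dCC F (Γseq j t) (Γ t) < ε) := by
  subst hF
  exact exists_minimizing_geodesic_general hW.nondegenerateWeight_sqrt P Q
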